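/- arXiv:2111.08413 — 2 statements merged into one kernel-verified Lean document; each statement's English description precedes it below -/
import Mathlib

section
/- Let D ≥ 1 and fix LayerNorm parameters γ β : Fin D → ℝ, with LN(x)_i = γ_i · N(x)_i + β_i where N(x)_i = (x_i − μ(x))/sqrt(Var(x)). Fix a positional embedding matrix E : Fin n → Fin D → ℝ and define the Swin-style early-stage output row-wise: z_swin(X)_k = LN(LN(X_k) + E_k) for X : Fin n → Fin D → ℝ. Assume that for each row k, Var(X_k) > 0 and Var(LN(X_k) + E_k) > 0. Then for every real a > 0 and every real b, z_swin(a•X + b•𝟙) = z_swin(X), where a•X + b•𝟙 denotes the matrix with entries a·X_{k,i} + b. -/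
open Finset

/-- Empirical mean of a vector. -/
noncomputable def emean {D : ℕ} (x : Fin D → ℝ) : ℝ := (1 / (D : ℝ)) * ∑ i, x i

/-- Empirical variance of a vector. -/
noncomputable def evar {D : ℕ} (x : Fin D → ℝ) : ℝ :=
  (1 / (D : ℝ)) * ∑ i, (x i - emean x) ^ 2

/-- LayerNorm normalization step. -/
noncomputable def nrm {D : ℕ} (x : Fin D → ℝ) : Fin D → ℝ :=
  fun i => (x i - emean x) / Real.sqrt (evar x)

/-- LayerNorm with per-channel parameters γ, β. -/
noncomputable def layerNorm {D : ℕ} (γ β : Fin D → ℝ) (x : Fin D → ℝ) : Fin D → ℝ :=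
  fun i => γ i * nrm x i + β i

/-- Swin-style early-stage output: PreLayerNorm, add positional embedding, PostLayerNorm,
applied row-wise. -/
noncomputable def zSwin {n D : ℕ} (γ β : Fin D → ℝ) (E : Fin n → Fin D → ℝ)
    (X : Fin n → Fin D → ℝ) : Fin n → Fin D → ℝ :=
  fun k => layerNorm γ β (layerNorm γ β (X k) + E k)

theorem emean_affine {D : ℕ} (hD : D ≠ 0) (a b : ℝ) (x : Fin D → ℝ) :
    emean (fun i => a * x i + b) = a * emean x + b := by
  have hD' : (D : ℝ) ≠ 0 := Nat.cast_ne_zero.mpr hD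
  simp only [emean, sum_add_distrib, ← mul_sum, sum_const, card_univ, Fintype.card_fin,
    nsmul_eq_mul]
  field_simp

theorem evar_affine {D : ℕ} (hD : D ≠ 0) (a b : ℝ) (x : Fin D → ℝ) :
    evar (fun i => a * x i + b) = a ^ 2 * evar x := by
  simp only [evar, emean_affine hD, add_sub_add_right_eq_sub, ← mul_sub, mul_pow, ← mul_sum]
  ring

theorem nrm_affine {D : ℕ} {a : ℝ} (ha : 0 < a) (b : ℝ) (x : Fin D → ℝ) :
    nrm (fun i => a * x i + b) = nrm x := by
  funext i
  have hD : D ≠ 0 := i.pos.ne'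
  simp only [nrm, evar_affine hD, emean_affine hD, add_sub_add_right_eq_sub, ← mul_sub,
    Real.sqrt_mul (sq_nonneg a), Real.sqrt_sq ha.le]
  exact mul_div_mul_left _ _ ha.ne'

theorem layerNorm_affine {D : ℕ} (γ β : Fin D → ℝ) {a : ℝ} (ha : 0 < a) (b : ℝ)
    (x : Fin D → ℝ) : layerNorm γ β (fun i => a * x i + b) = layerNorm γ β x := by
  unfold layerNorm
  rw [nrm_affine ha]

theorem stmt_2 {n D : ℕ} (hD : 1 ≤ D) (γ β : Fin D → ℝ)
    (E : Fin n → Fin D → ℝ) (X : Fin n → Fin D → ℝ)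
    (hX : ∀ k, 0 < evar (X k))
    (hXE : ∀ k, 0 < evar (layerNorm γ β (X k) + E k))
    (a b : ℝ) (ha : 0 < a) :
    zSwin γ β E (fun k i => a * X k i + b) = zSwin γ β E X := by
  unfold zSwin
  simp only [layerNorm_affine γ β ha]
end

section
/- Let D ≥ 1, let e : Fin D → ℝ, and let x : Fin D → ℝ with Var(x) > 0, where N(y)_i = (y_i − μ(y))/sqrt(Var(y)). Then the function a ↦ N(a•x + e) tends to N(x) as a → +∞ (limit along the filter atTop in ℝ, in the space Fin D → ℝ). -/
open Finset

theorem emean_smul {D : ℕ} (a : ℝ) (x : Fin D → ℝ) : emean (a • x) = a * emean x := by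
  simp only [emean, Pi.smul_apply, smul_eq_mul, ← mul_sum]
  ring

theorem evar_smul {D : ℕ} (a : ℝ) (x : Fin D → ℝ) : evar (a • x) = a ^ 2 * evar x := by
  simp only [evar, emean_smul, Pi.smul_apply, smul_eq_mul, ← mul_sub, mul_pow, ← mul_sum]
  ring

theorem nrm_smul_of_pos {D : ℕ} {a : ℝ} (ha : 0 < a) (x : Fin D → ℝ) :
    nrm (a • x) = nrm x := by
  funext i
  simp only [nrm, emean_smul, evar_smul, Pi.smul_apply, smul_eq_mul, ← mul_sub]
  rw [Real.sqrt_mul (sq_nonneg a), Real.sqrt_sq ha.le, mul_div_mul_left _ _ ha.ne']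

theorem continuous_emean {D : ℕ} : Continuous (emean : (Fin D → ℝ) → ℝ) := by
  unfold emean
  fun_prop

theorem continuous_evar {D : ℕ} : Continuous (evar : (Fin D → ℝ) → ℝ) := by
  have := continuous_emean (D := D)
  unfold evar
  fun_prop

theorem continuousAt_nrm {D : ℕ} {x : Fin D → ℝ} (hx : 0 < evar x) : ContinuousAt nrm x :=
  continuousAt_pi.2 fun i =>
    ((continuous_apply i).sub continuous_emean).continuousAt.div
      continuous_evar.sqrt.continuousAt (Real.sqrt_pos.2 hx).ne'

theorem stmt_7 {D : ℕ} (hD : 1 ≤ D) (e x : Fin D → ℝ) (hx : 0 < evar x) :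
    Filter.Tendsto (fun a : ℝ => nrm (a • x + e)) Filter.atTop (nhds (nrm x)) := by
  have hlim : Filter.Tendsto (fun a : ℝ => x + a⁻¹ • e) Filter.atTop (nhds x) := by
    simpa using ((tendsto_inv_atTop_zero (𝕜 := ℝ)).smul_const e).const_add x
  refine ((continuousAt_nrm hx).tendsto.comp hlim).congr' ?_
  filter_upwards [Filter.eventually_gt_atTop 0] with a ha
  rw [Function.comp_apply, ← nrm_smul_of_pos ha, smul_add, smul_inv_smul₀ ha.ne']
end
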